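/- Let h, k, m be integers with 1 ≤ h < k, gcd(h,k) = 1 and 0 ≤ m < k, and let (β₀,γ₀) be any pair in Z(h,k) with |β₀γ₀| minimal (i.e. |β₀γ₀| ≤ |βγ| for all (β,γ) ∈ Z(h,k)). Then | S(m;h,k) − Cl₂(2π m γ₀/k)/|β₀γ₀| | ≤ (15.06 + 2√2·log k)/√k. -/

import Mathlib

/-!
The pairs of `Z(h,k)` lie in the lattice `{(β,γ) : βh ≡ γ mod k}`, so two of them have determinant
divisible by `k`. If `p = (β,γ)` and `v = (b,c)` are not parallel, then `k ≤ |β| c + |b| γ`, and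
dividing by `k |β| γ` gives `1/(|β|γ) ≤ (c/γ + |b|/|β|)/k` (`inv_le_of_not_par`). Each `γ` and each
`|β|` occurs at most twice in `Z(h,k)`, so the points not parallel to `v` contribute at most
`2 (|b| + c)(1 + log k)/k` (`sum_not_par_le`).

Take for `v` the point `v₁` of `Z(h,k)` of least `ℓ¹`-norm. A pigeonhole argument
(`exists_small`) bounds this norm by `L = 2⌊√(k/2)⌋ + 1 ≤ √(2k) + 1`. The points
parallel to `v₁` are its positive multiples (`eq_mul_of_par`), and likewise those parallel to
`(β₀,γ₀)` are multiples of `(β₀,γ₀)`. If the two vectors are parallel they coincide, and the multiples produce `Cl₂/|β₀γ₀|` up to a tail of size `2/k`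
(`par_sum_sub_le`). Otherwise `1/|β₀γ₀| ≤ L/k` by the determinant inequality, so by minimality both
the multiples of `v₁` and the Clausen term contribute at most `2L/k`. In either case the error is at
most `(6 + 2 log k) L/k`, which suffices for `k ≥ 4`; the remaining `k` are covered by the trivial
bound `4 + 2 log k`.
-/

open scoped Real Classical

/-- Clausen's function `Cl₂(θ) = Σ_{n≥1} sin(nθ)/n²`. -/
noncomputable def Cl2 (θ : ℝ) : ℝ := ∑' n : ℕ, Real.sin (n * θ) / (n : ℝ) ^ 2

/-- Membership in `Z(h,k) = {(β,γ) : 1 ≤ |β| < k, 1 ≤ γ < k, βh ≡ γ (mod k)}`. -/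
def Zhk (h k : ℕ) (p : ℤ × ℤ) : Prop :=
  1 ≤ |p.1| ∧ |p.1| < (k : ℤ) ∧ 1 ≤ p.2 ∧ p.2 < (k : ℤ) ∧
    p.1 * (h : ℤ) ≡ p.2 [ZMOD (k : ℤ)]

/-- The finite set of pairs in `Z(h,k)`. -/
noncomputable def ZhkFinset (h k : ℕ) : Finset (ℤ × ℤ) :=
  (Finset.Icc (-(k : ℤ)) (k : ℤ) ×ˢ Finset.Icc 1 ((k : ℤ) - 1)).filter
    (fun p => Zhk h k p)

/-- `S(m;h,k) = Σ_{(β,γ) ∈ Z(h,k)} sin(2πmγ/k)/|βγ|`. -/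
noncomputable def S (m h k : ℕ) : ℝ :=
  ∑ p ∈ ZhkFinset h k, Real.sin (2 * π * m * (p.2 : ℝ) / k) / |(p.1 : ℝ) * (p.2 : ℝ)|

/-- The partial sum `Σ_{n<N} sin(nθ)/n²` of Clausen's series. -/
noncomputable def clPart (θ : ℝ) (N : ℕ) : ℝ :=
  ∑ n ∈ Finset.range N, Real.sin (n * θ) / (n : ℝ) ^ 2

/-- Two integer vectors are parallel: their determinant vanishes. -/
def Par (p v : ℤ × ℤ) : Prop := p.1 * v.2 = v.1 * p.2

/-- `v` has the least second coordinate among the points of `Z(h,k)` parallel to it. -/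
def ClassMin (h k : ℕ) (v : ℤ × ℤ) : Prop :=
  ∀ p : ℤ × ℤ, Zhk h k p → Par p v → v.2 ≤ p.2

/-- The summand of `S(m;h,k)`. -/
noncomputable def summand (m k : ℕ) (p : ℤ × ℤ) : ℝ :=
  Real.sin (2 * π * m * (p.2 : ℝ) / k) / |(p.1 : ℝ) * (p.2 : ℝ)|

/-! ### Clausen's series -/

lemma abs_sin_div_sq_le (θ : ℝ) (n : ℕ) :
    |Real.sin (n * θ) / (n : ℝ) ^ 2| ≤ ((n : ℝ) ^ 2)⁻¹ := by
  rw [abs_div, abs_of_nonneg (sq_nonneg (n : ℝ)), div_eq_mul_inv]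
  exact mul_le_of_le_one_left (by positivity) (Real.abs_sin_le_one _)

lemma clPart_sub_le (θ : ℝ) (N M : ℕ) (hNM : N + 1 ≤ M) :
    |clPart θ M - clPart θ (N + 1)| ≤ 2 / (N + 1) := by
  unfold clPart
  rw [← Finset.sum_Ico_eq_sub _ hNM]
  refine (Finset.abs_sum_le_sum_abs _ _).trans ?_
  refine (Finset.sum_le_sum fun n _ => abs_sin_div_sq_le θ n).trans ?_
  have := sum_Ioo_inv_sq_le (α := ℝ) N M
  have e : Finset.Ioo N M = Finset.Ico (N + 1) M := by
    ext x; simp [Finset.mem_Ioo, Finset.mem_Ico]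
  rwa [e] at this

lemma clPart_tendsto (θ : ℝ) :
    Filter.Tendsto (clPart θ) Filter.atTop (nhds (Cl2 θ)) := by
  have hs : Summable fun n : ℕ => Real.sin (n * θ) / (n : ℝ) ^ 2 := by
    refine Summable.of_norm_bounded (g := fun n : ℕ => ((n : ℝ) ^ 2)⁻¹)
      (Real.summable_nat_pow_inv.2 (by norm_num)) ?_
    intro n
    exact abs_sin_div_sq_le θ n
  exact hs.hasSum.tendsto_sum_nat

lemma cl2_sub_le (θ : ℝ) (N : ℕ) : |clPart θ (N + 1) - Cl2 θ| ≤ 2 / (N + 1) := by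
  rw [abs_sub_comm]
  refine le_of_tendsto ((clPart_tendsto θ).sub_const _).abs ?_
  filter_upwards [Filter.eventually_ge_atTop (N + 1)] with M hM
  exact clPart_sub_le θ N M hM

lemma clPart_one (θ : ℝ) : clPart θ 1 = 0 := by simp [clPart]

lemma abs_clPart_le (θ : ℝ) (N : ℕ) : |clPart θ (N + 1)| ≤ 2 := by
  have := clPart_sub_le θ 0 (N + 1) (by omega)
  simpa [clPart_one] using this

lemma abs_cl2_le (θ : ℝ) : |Cl2 θ| ≤ 2 := by
  have := cl2_sub_le θ 0
  simpa [clPart_one] using this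

/-! ### Geometry of the lattice -/

lemma mem_ZhkFinset {h k : ℕ} {p : ℤ × ℤ} : p ∈ ZhkFinset h k ↔ Zhk h k p := by
  unfold ZhkFinset
  simp only [Finset.mem_filter, Finset.mem_product, Finset.mem_Icc, and_iff_right_iff_imp]
  rintro ⟨_, h2, h3, h4, _⟩
  have := abs_lt.1 h2
  omega

lemma dvd_det {h k : ℕ} {p v : ℤ × ℤ} (hp : Zhk h k p) (hv : Zhk h k v) :
    (k : ℤ) ∣ p.1 * v.2 - v.1 * p.2 := by
  obtain ⟨a, ha⟩ := hp.2.2.2.2.dvd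
  obtain ⟨b, hb⟩ := hv.2.2.2.2.dvd
  refine ⟨p.1 * b - v.1 * a, ?_⟩
  linear_combination p.1 * hb - v.1 * ha

lemma le_of_not_par {h k : ℕ} {p v : ℤ × ℤ} (hp : Zhk h k p) (hv : Zhk h k v)
    (hpv : ¬ Par p v) : (k : ℤ) ≤ |p.1| * v.2 + |v.1| * p.2 := by
  have h0 : p.1 * v.2 - v.1 * p.2 ≠ 0 := fun e => hpv (by unfold Par; linarith)
  have h1 := Int.le_of_dvd (abs_pos.2 h0) ((dvd_abs _ _).2 (dvd_det hp hv))
  have h2 := abs_sub (p.1 * v.2) (v.1 * p.2)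
  rw [abs_mul, abs_mul, abs_of_pos (show 0 < v.2 by have := hv.2.2.1; omega),
    abs_of_pos (show 0 < p.2 by have := hp.2.2.1; omega)] at h2
  exact h1.trans h2

lemma cast_pos {h k : ℕ} {p : ℤ × ℤ} (hp : Zhk h k p) :
    (1 : ℝ) ≤ |(p.1 : ℝ)| ∧ (1 : ℝ) ≤ (p.2 : ℝ) := by
  have h1 := hp.1
  have h2 := hp.2.2.1
  exact ⟨by exact_mod_cast h1, by exact_mod_cast h2⟩

lemma inv_le_of_not_par {h k : ℕ} (hk : 0 < k) {p v : ℤ × ℤ} (hp : Zhk h k p) (hv : Zhk h k v)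
    (hpv : ¬ Par p v) :
    1 / (|(p.1 : ℝ)| * p.2) ≤ (1 / k) * (v.2 * (1 / (p.2 : ℝ)) + |(v.1 : ℝ)| * (1 / |(p.1 : ℝ)|)) := by
  have h1 : (k : ℝ) ≤ |(p.1 : ℝ)| * v.2 + |(v.1 : ℝ)| * p.2 := by
    exact_mod_cast le_of_not_par hp hv hpv
  obtain ⟨h2, h3⟩ := cast_pos hp
  have hk' : (0 : ℝ) < k := by exact_mod_cast hk
  have h2' : 0 < |(p.1 : ℝ)| := by linarith
  have h3' : 0 < (p.2 : ℝ) := by linarith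
  have e : (1 / (k : ℝ)) * (v.2 * (1 / (p.2 : ℝ)) + |(v.1 : ℝ)| * (1 / |(p.1 : ℝ)|))
      = (|(p.1 : ℝ)| * v.2 + |(v.1 : ℝ)| * p.2) / (k * (|(p.1 : ℝ)| * p.2)) := by
    field_simp
  rw [e, div_le_div_iff₀ (by positivity) (by positivity)]
  have : 0 < |(p.1 : ℝ)| * p.2 := by positivity
  nlinarith

/-- The points of `Z(h,k)` on the ray of a class-minimal `v` are positive multiples of `v`: otherwise
the remainder of Euclidean division by `v` would be a smaller point on that ray. -/
lemma eq_mul_of_par {h k : ℕ} {p v : ℤ × ℤ} (hp : Zhk h k p) (hv : Zhk h k v)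
    (hm : ClassMin h k v) (hpv : Par p v) :
    ∃ n : ℕ, 1 ≤ n ∧ p = ((n : ℤ) * v.1, (n : ℤ) * v.2) := by
  obtain ⟨b, c⟩ := v
  obtain ⟨x, y⟩ := p
  obtain ⟨hp1, hp2, hp3, hp4, hp5⟩ := hp
  obtain ⟨hv1, hv2, hv3, hv4, hv5⟩ := hv
  simp only [Par] at *
  have hdm := Int.mul_ediv_add_emod y c
  have hr0 := Int.emod_nonneg y (show c ≠ 0 by omega)
  have hr1 := Int.emod_lt_of_pos y (show 0 < c by omega)
  have hn0 : 0 ≤ y / c := Int.ediv_nonneg (by omega) (by omega)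
  set n := y / c
  set r := y % c
  have hq : (x - n * b) * c = b * r := by
    have : y = c * n + r := hdm.symm
    rw [this] at hpv
    linear_combination hpv
  have hb : b ≠ 0 := by rintro rfl; simp at hv1
  by_cases hr : r = 0
  · rw [hr, mul_zero] at hq
    have hx : x - n * b = 0 := by
      rcases mul_eq_zero.1 hq with h | h
      · exact h
      · omega
    have hy : y = n * c := by rw [← hdm, hr]; ring
    refine ⟨n.toNat, ?_, ?_⟩
    · have : n ≠ 0 := by
        intro h0; rw [h0] at hy; simp at hy; omega
      omega
    · rw [Int.toNat_of_nonneg hn0]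
      ext
      · simp only; linarith
      · simp only; exact hy
  · exfalso
    have hx0 : x - n * b ≠ 0 := by
      intro h0
      rw [h0, zero_mul] at hq
      rcases mul_eq_zero.1 hq.symm with h | h
      · exact hb h
      · exact hr h
    have hlt : |x - n * b| < |b| := by
      have e : |x - n * b| * c = |b| * r := by
        have := congrArg abs hq
        rwa [abs_mul, abs_mul, abs_of_nonneg hr0, abs_of_pos (show 0 < c by omega)] at this
      have hbp : 0 < |b| := abs_pos.2 hb
      by_contra hcon
      push Not at hcon
      nlinarith
    have hyr : r = y - n * c := by rw [← hdm]; ring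
    have := hm (x - n * b, r)
      ⟨Int.one_le_abs hx0, by simp only; omega, by simp only; omega, by simp only; omega, by
        simp only
        rw [hyr, sub_mul, mul_assoc]
        exact hp5.sub (hv5.mul_left n)⟩ hq
    simp only at this
    omega

lemma summand_mul (m k n : ℕ) (v : ℤ × ℤ) :
    summand m k ((n : ℤ) * v.1, (n : ℤ) * v.2) =
      (1 / |(v.1 : ℝ) * v.2|) *
        (Real.sin (n * (2 * π * m * (v.2 : ℝ) / k)) / (n : ℝ) ^ 2) := by
  unfold summand
  push_cast
  have e1 : 2 * π * m * ((n : ℝ) * v.2) / k = n * (2 * π * m * (v.2 : ℝ) / k) := by ring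
  have e2 : |(n : ℝ) * v.1 * (n * v.2)| = (n : ℝ) ^ 2 * |(v.1 : ℝ) * v.2| := by
    rw [show (n : ℝ) * v.1 * (n * v.2) = (n : ℝ) ^ 2 * ((v.1 : ℝ) * v.2) by ring, abs_mul,
      abs_of_nonneg (sq_nonneg (n : ℝ))]
  rw [e1, e2, one_div_mul_eq_div, div_div]

lemma par_sum_eq {h k m : ℕ} {v : ℤ × ℤ} (hv : Zhk h k v) (hm : ClassMin h k v) :
    ∃ N : ℕ, (k : ℝ) ≤ (N + 1) * |(v.1 : ℝ) * v.2| ∧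
      ∑ p ∈ (ZhkFinset h k).filter (fun p => Par p v), summand m k p =
        (1 / |(v.1 : ℝ) * v.2|) * clPart (2 * π * m * (v.2 : ℝ) / k) (N + 1) := by
  have hv1 := hv.1
  have hv3 := hv.2.2.1
  obtain ⟨M, hM⟩ : ∃ M : ℕ, (M : ℤ) = max |v.1| v.2 :=
    ⟨(max |v.1| v.2).toNat, Int.toNat_of_nonneg (le_max_of_le_right (by omega))⟩
  have hMpos : 0 < M := by
    have := le_max_right |v.1| v.2
    omega
  refine ⟨(k - 1) / M, ?_, ?_⟩
  · have h1 : k ≤ ((k - 1) / M + 1) * M := by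
      have := Nat.lt_div_mul_add (a := k - 1) hMpos
      rw [add_mul, one_mul]; omega
    have h2 : (M : ℤ) ≤ |v.1 * v.2| := by
      rw [hM, abs_mul, abs_of_pos (show 0 < v.2 by omega)]
      refine max_le ?_ ?_ <;> nlinarith
    have h1' : (k : ℝ) ≤ (((k - 1) / M : ℕ) + 1) * M := by exact_mod_cast h1
    have h2' : (M : ℝ) ≤ |(v.1 : ℝ) * v.2| := by exact_mod_cast h2
    refine h1'.trans ?_
    gcongr
  · have himg : (ZhkFinset h k).filter (fun p => Par p v) =
        (Finset.Ico 1 ((k - 1) / M + 1)).image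
          (fun n : ℕ => ((n : ℤ) * v.1, (n : ℤ) * v.2)) := by
      ext p
      simp only [Finset.mem_filter, mem_ZhkFinset, Finset.mem_image, Finset.mem_Ico]
      have hk1 : 1 ≤ k := by
        have := hv.2.1; omega
      constructor
      · rintro ⟨hp, hpv⟩
        obtain ⟨n, hn, rfl⟩ := eq_mul_of_par hp hv hm hpv
        refine ⟨n, ⟨hn, ?_⟩, rfl⟩
        rw [Nat.lt_succ_iff, Nat.le_div_iff_mul_le hMpos]
        have h2 := hp.2.1
        have h4 := hp.2.2.2.1
        simp only [abs_mul, Nat.abs_cast] at h2 h4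
        have : (n : ℤ) * M < k := by
          rw [hM]
          rcases max_choice |v.1| v.2 with e | e <;> rw [e] <;> assumption
        have : n * M < k := by exact_mod_cast this
        omega
      · rintro ⟨n, ⟨hn, hnN⟩, rfl⟩
        rw [Nat.lt_succ_iff, Nat.le_div_iff_mul_le hMpos] at hnN
        have hlt : (n : ℤ) * M < k := by
          have : n * M < k := by omega
          exact_mod_cast this
        have hnz : (1 : ℤ) ≤ n := by exact_mod_cast hn
        have hb := le_max_left |v.1| v.2
        have hc := le_max_right |v.1| v.2
        rw [← hM] at hb hc
        refine ⟨⟨?_, ?_, ?_, ?_, ?_⟩, ?_⟩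
        · simp only [abs_mul, Nat.abs_cast]; nlinarith
        · simp only [abs_mul, Nat.abs_cast]; nlinarith
        · simp only; nlinarith
        · simp only; nlinarith
        · simp only
          rw [mul_assoc]
          exact hv.2.2.2.2.mul_left _
        · unfold Par; simp only; ring
    rw [himg, Finset.sum_image]
    · simp only [summand_mul]
      rw [← Finset.mul_sum, clPart, Finset.range_eq_Ico,
        Finset.sum_eq_sum_Ico_succ_bot (Nat.succ_pos _)]
      simp
    · intro a _ b _ hab
      simp only [Prod.mk.injEq] at hab
      have := mul_right_cancel₀ (show v.2 ≠ 0 by omega) hab.2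
      exact_mod_cast this

lemma one_le_prod {h k : ℕ} {v : ℤ × ℤ} (hv : Zhk h k v) : 1 ≤ |(v.1 : ℝ) * v.2| := by
  obtain ⟨h1, h2⟩ := cast_pos hv
  rw [abs_mul, abs_of_pos (show (0 : ℝ) < v.2 by linarith)]
  nlinarith

lemma par_sum_sub_le {h k m : ℕ} (hk : 0 < k) {v : ℤ × ℤ} (hv : Zhk h k v)
    (hm : ClassMin h k v) :
    |∑ p ∈ (ZhkFinset h k).filter (fun p => Par p v), summand m k p -
      Cl2 (2 * π * m * (v.2 : ℝ) / k) / (|(v.1 : ℝ) * v.2|)| ≤ 2 / k := by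
  obtain ⟨N, hN, e⟩ := par_sum_eq (m := m) hv hm
  have hP := one_le_prod hv
  have hP' : 0 < |(v.1 : ℝ) * v.2| := by linarith
  have hk' : (0 : ℝ) < k := by exact_mod_cast hk
  rw [e, div_eq_mul_one_div (Cl2 _), mul_comm (Cl2 _), ← mul_sub, abs_mul,
    abs_of_pos (by positivity : 0 < 1 / |(v.1 : ℝ) * v.2|)]
  calc _ ≤ 1 / |(v.1 : ℝ) * v.2| * (2 / (N + 1)) := by
        gcongr
        exact cl2_sub_le _ N
    _ = 2 / ((N + 1) * |(v.1 : ℝ) * v.2|) := by field_simp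
    _ ≤ 2 / k := by gcongr

lemma abs_par_sum_le {h k m : ℕ} {v : ℤ × ℤ} (hv : Zhk h k v) (hm : ClassMin h k v) :
    |∑ p ∈ (ZhkFinset h k).filter (fun p => Par p v), summand m k p|
      ≤ 2 * (1 / |(v.1 : ℝ) * v.2|) := by
  obtain ⟨N, hN, e⟩ := par_sum_eq (m := m) hv hm
  have hP := one_le_prod hv
  have hP' : 0 < |(v.1 : ℝ) * v.2| := by linarith
  rw [e, abs_mul, abs_of_pos (by positivity : 0 < 1 / |(v.1 : ℝ) * v.2|), mul_comm]
  gcongr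
  exact abs_clPart_le _ N

/-! ### Harmonic sums over `Z(h,k)` -/

/-- A sum of reciprocals of distinct integers in `[1,k)`. -/
lemma sum_inv_le_of_injOn {k : ℕ} (s : Finset (ℤ × ℤ)) (f : ℤ × ℤ → ℤ)
    (hf : Set.InjOn f s) (hr : ∀ p ∈ s, 1 ≤ f p ∧ f p < k) :
    ∑ p ∈ s, 1 / (f p : ℝ) ≤ 1 + Real.log k := by
  have h1 : ∑ p ∈ s, 1 / (f p : ℝ) ≤ ∑ n ∈ Finset.Icc 1 k, ((n : ℝ))⁻¹ := by
    have hf' : Set.InjOn (fun p => (f p).toNat) s := by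
      intro a ha b hb hab
      apply hf ha hb
      have := hr a ha
      have := hr b hb
      simp only at hab
      omega
    have : ∑ p ∈ s, 1 / (f p : ℝ) = ∑ n ∈ s.image (fun p => (f p).toNat), ((n : ℝ))⁻¹ := by
      rw [Finset.sum_image hf']
      refine Finset.sum_congr rfl fun p hp => ?_
      have h2 : (((f p).toNat : ℤ)) = f p := Int.toNat_of_nonneg (by have := hr p hp; omega)
      have h3 : (((f p).toNat : ℝ)) = f p := by exact_mod_cast h2
      rw [h3, one_div]
    rw [this]
    refine Finset.sum_le_sum_of_subset_of_nonneg ?_ fun _ _ _ => by positivity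
    intro n hn
    obtain ⟨p, hp, rfl⟩ := Finset.mem_image.1 hn
    have := hr p hp
    simp only [Finset.mem_Icc]
    omega
  refine h1.trans ?_
  have := harmonic_le_one_add_log k
  rw [harmonic_eq_sum_Icc] at this
  push_cast at this
  exact this

lemma eq_of_dvd_of_abs_lt {k : ℕ} {a b : ℤ} (ha : 1 ≤ a) (ha' : a < k) (hb : 1 ≤ b) (hb' : b < k)
    (hd : (k : ℤ) ∣ a - b) : a = b := by
  have : a - b = 0 := Int.eq_zero_of_abs_lt_dvd hd (by rw [abs_lt]; omega)
  omega

lemma dvd_fst_sub {h k : ℕ} (hgcd : Nat.gcd h k = 1) {p q : ℤ × ℤ} (hp : Zhk h k p)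
    (hq : Zhk h k q) (e : p.2 = q.2) : (k : ℤ) ∣ p.1 - q.1 := by
  have h1 := hp.2.2.2.2
  have h2 := hq.2.2.2.2
  rw [e] at h1
  have h3 : (k : ℤ) ∣ q.1 * h - p.1 * h := (h1.trans h2.symm).dvd
  have h4 : IsCoprime (k : ℤ) (h : ℤ) := (Nat.isCoprime_iff_coprime.2 hgcd).symm
  have h5 : (k : ℤ) ∣ (p.1 - q.1) * h := by
    have := (dvd_neg (α := ℤ)).2 h3
    rwa [neg_sub, ← sub_mul] at this
  exact h4.dvd_of_dvd_mul_right h5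

lemma dvd_snd_sub {h k : ℕ} {p q : ℤ × ℤ} (hp : Zhk h k p)
    (hq : Zhk h k q) (e : p.1 = q.1) : (k : ℤ) ∣ p.2 - q.2 := by
  have h1 := hp.2.2.2.2
  have h2 := hq.2.2.2.2
  rw [e] at h1
  exact (h2.symm.trans h1).dvd

/-- The sums `Σ 1/γ` and `Σ 1/|β|` over `Z(h,k)` are harmonic: on each of the halves `β > 0`
and `β < 0` either coordinate determines the point. -/
lemma sum_inv_coord_le {h k : ℕ} (hgcd : Nat.gcd h k = 1) :
    ∑ p ∈ ZhkFinset h k, 1 / (p.2 : ℝ) ≤ 2 * (1 + Real.log k) ∧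
    ∑ p ∈ ZhkFinset h k, 1 / |(p.1 : ℝ)| ≤ 2 * (1 + Real.log k) := by
  have inj : ∀ p q : ℤ × ℤ, Zhk h k p → Zhk h k q → (0 < p.1 ↔ 0 < q.1) →
      (p.2 = q.2 ∨ |p.1| = |q.1|) → p = q := by
    intro p q hp hq hs he
    have p1 := hp.1
    have q1 := hq.1
    have p2 := hp.2.1
    have q2 := hq.2.1
    have p3 := hp.2.2.1
    have q3 := hq.2.2.1
    have p4 := hp.2.2.2.1
    have q4 := hq.2.2.2.1
    have e1 : p.1 = q.1 := by
      rcases he with he | he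
      · have hd := dvd_fst_sub hgcd hp hq he
        have : p.1 - q.1 = 0 := by
          refine Int.eq_zero_of_abs_lt_dvd hd ?_
          rw [abs_lt]
          rcases abs_cases p.1 with ⟨a, _⟩ | ⟨a, _⟩ <;>
            rcases abs_cases q.1 with ⟨b, _⟩ | ⟨b, _⟩ <;> omega
        omega
      · rcases abs_cases p.1 with ⟨a, _⟩ | ⟨a, _⟩ <;>
            rcases abs_cases q.1 with ⟨b, _⟩ | ⟨b, _⟩ <;> omega
    exact Prod.ext e1 (eq_of_dvd_of_abs_lt p3 p4 q3 q4 (dvd_snd_sub hp hq e1))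
  have split : ∀ f : ℤ × ℤ → ℤ, (∀ p, Zhk h k p → 1 ≤ f p ∧ f p < k) →
      (∀ p q, f p = f q → (p.2 = q.2 ∨ |p.1| = |q.1|)) →
      ∑ p ∈ ZhkFinset h k, 1 / (f p : ℝ) ≤ 2 * (1 + Real.log k) := by
    intro f hf hfi
    rw [← Finset.sum_filter_add_sum_filter_not _ (fun p : ℤ × ℤ => 0 < p.1), two_mul]
    refine add_le_add (sum_inv_le_of_injOn _ f ?_ ?_) (sum_inv_le_of_injOn _ f ?_ ?_)
    · intro p hp q hq e
      simp only [Finset.coe_filter, mem_ZhkFinset, Set.mem_ofPred_eq] at hp hq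
      exact inj p q hp.1 hq.1 (by simp [hp.2, hq.2]) (hfi p q e)
    · intro p hp
      exact hf p (mem_ZhkFinset.1 (Finset.mem_filter.1 hp).1)
    · intro p hp q hq e
      simp only [Finset.coe_filter, mem_ZhkFinset, Set.mem_ofPred_eq] at hp hq
      exact inj p q hp.1 hq.1 (iff_of_false hp.2 hq.2) (hfi p q e)
    · intro p hp
      exact hf p (mem_ZhkFinset.1 (Finset.mem_filter.1 hp).1)
  refine ⟨split (fun p => p.2) (fun p hp => ⟨hp.2.2.1, hp.2.2.2.1⟩) fun p q e => Or.inl e, ?_⟩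
  have := split (fun p => |p.1|) (fun p hp => ⟨hp.1, hp.2.1⟩) fun p q e => Or.inr e
  simpa using this

lemma abs_summand_le {h k m : ℕ} {p : ℤ × ℤ} (hp : Zhk h k p) :
    |summand m k p| ≤ 1 / (|(p.1 : ℝ)| * p.2) := by
  obtain ⟨h1, h2⟩ := cast_pos hp
  unfold summand
  rw [abs_div, abs_abs, abs_mul, abs_of_pos (show (0 : ℝ) < p.2 by linarith)]
  gcongr
  exact Real.abs_sin_le_one _

lemma sum_not_par_le {h k m : ℕ} (hk : 0 < k) (hgcd : Nat.gcd h k = 1) {v : ℤ × ℤ}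
    (hv : Zhk h k v) :
    |∑ p ∈ (ZhkFinset h k).filter (fun p => ¬ Par p v), summand m k p|
      ≤ (|(v.1 : ℝ)| + v.2) / k * (2 * (1 + Real.log k)) := by
  obtain ⟨s1, s2⟩ := sum_inv_coord_le hgcd
  obtain ⟨v1, v2⟩ := cast_pos hv
  have hk' : (0 : ℝ) < k := by exact_mod_cast hk
  calc _ ≤ ∑ p ∈ (ZhkFinset h k).filter (fun p => ¬ Par p v), |summand m k p| :=
        Finset.abs_sum_le_sum_abs _ _
    _ ≤ ∑ p ∈ (ZhkFinset h k).filter (fun p => ¬ Par p v),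
          (1 / k) * (v.2 * (1 / (p.2 : ℝ)) + |(v.1 : ℝ)| * (1 / |(p.1 : ℝ)|)) := by
        refine Finset.sum_le_sum fun p hp => ?_
        rw [Finset.mem_filter, mem_ZhkFinset] at hp
        exact (abs_summand_le hp.1).trans (inv_le_of_not_par hk hp.1 hv hp.2)
    _ ≤ ∑ p ∈ ZhkFinset h k,
          (1 / k) * (v.2 * (1 / (p.2 : ℝ)) + |(v.1 : ℝ)| * (1 / |(p.1 : ℝ)|)) := by
        refine Finset.sum_le_sum_of_subset_of_nonneg (Finset.filter_subset _ _) ?_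
        intro p hp _
        obtain ⟨p1, p2⟩ := cast_pos (mem_ZhkFinset.1 hp)
        have : (0 : ℝ) < p.2 := by linarith
        have : (0 : ℝ) < v.2 := by linarith
        positivity
    _ = (1 / k) * (v.2 * ∑ p ∈ ZhkFinset h k, 1 / (p.2 : ℝ) +
          |(v.1 : ℝ)| * ∑ p ∈ ZhkFinset h k, 1 / |(p.1 : ℝ)|) := by
        rw [← Finset.mul_sum, Finset.sum_add_distrib, Finset.mul_sum, Finset.mul_sum]
    _ ≤ (1 / k) * (v.2 * (2 * (1 + Real.log k)) + |(v.1 : ℝ)| * (2 * (1 + Real.log k))) := by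
        have : (0 : ℝ) ≤ v.2 := by linarith
        gcongr
    _ = _ := by ring

lemma abs_S_le {h k m : ℕ} (hgcd : Nat.gcd h k = 1) :
    |S m h k| ≤ 2 * (1 + Real.log k) := by
  refine (Finset.abs_sum_le_sum_abs _ _).trans ?_
  refine le_trans (Finset.sum_le_sum fun p hp => ?_) (sum_inv_coord_le hgcd).1
  rw [mem_ZhkFinset] at hp
  obtain ⟨p1, p2⟩ := cast_pos hp
  refine (abs_summand_le (m := m) hp).trans ?_
  have : (0 : ℝ) < p.2 := by linarith
  gcongr
  nlinarith

/-! ### A short lattice vector -/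

/-- With `t = ⌊√(k/2)⌋`, the `2(t+1)² > k` points `(a - b, a + b + e)` with `0 ≤ a, b ≤ t` and
`e ∈ {0,1}` fill a diamond, and two of them agree modulo the lattice. Their difference has
`ℓ¹`-norm at most `2t + 1 < k`. -/
lemma exists_small {h k : ℕ} (hk : 4 ≤ k) (hgcd : Nat.gcd h k = 1) :
    ∃ v : ℤ × ℤ, Zhk h k v ∧ |v.1| + v.2 ≤ 2 * (Nat.sqrt (k / 2) : ℤ) + 1 := by
  set t := Nat.sqrt (k / 2) with ht
  have ht1 : t * t ≤ k / 2 := Nat.sqrt_le _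
  have ht2 : k / 2 < (t + 1) * (t + 1) := Nat.lt_succ_sqrt _
  have htk : 2 * t + 1 < k := by
    by_contra hcon
    push Not at hcon
    have h2 : t * t * 2 ≤ k := by omega
    have : t ≤ 1 := by nlinarith
    have : 4 ≤ 2 * t + 1 := by omega
    omega
  let F : ℕ × ℕ × ℕ → ℤ := fun x =>
    (((x.1 : ℤ) - x.2.1) * h - (x.1 + x.2.1 + x.2.2)) % k
  let D : Finset (ℕ × ℕ × ℕ) :=
    Finset.range (t + 1) ×ˢ Finset.range (t + 1) ×ˢ Finset.range 2
  have hcard : (Finset.Ico (0 : ℤ) k).card < D.card := by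
    simp only [D, Finset.card_product, Finset.card_range, Int.card_Ico, sub_zero, Int.toNat_natCast]
    have : k < 2 * ((t + 1) * (t + 1)) := by omega
    nlinarith
  have hmap : ∀ x ∈ D, F x ∈ Finset.Ico (0 : ℤ) k := by
    intro x _
    rw [Finset.mem_Ico]
    exact ⟨Int.emod_nonneg _ (by omega), Int.emod_lt_of_pos _ (by omega)⟩
  obtain ⟨x, hx, y, hy, hxy, hF⟩ := Finset.exists_ne_map_eq_of_card_lt_of_maps_to hcard hmap
  obtain ⟨a, b, e⟩ := x
  obtain ⟨a', b', e'⟩ := y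
  simp only [D, Finset.mem_product, Finset.mem_range] at hx hy
  have hF' : (k : ℤ) ∣ (((a' : ℤ) - b') * h - (a' + b' + e')) - (((a : ℤ) - b) * h - (a + b + e)) :=
    (show (((a : ℤ) - b) * h - (a + b + e)) ≡ (((a' : ℤ) - b') * h - (a' + b' + e')) [ZMOD k]
      from hF).dvd
  obtain ⟨β, hβ⟩ : ∃ β : ℤ, β = ((a' : ℤ) - b') - (a - b) := ⟨_, rfl⟩
  obtain ⟨γ, hγ⟩ : ∃ γ : ℤ, γ = ((a' : ℤ) + b' + e') - (a + b + e) := ⟨_, rfl⟩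
  have hd : (k : ℤ) ∣ β * h - γ := by
    convert hF' using 1
    rw [hβ, hγ]; ring
  have hne : β ≠ 0 ∨ γ ≠ 0 := by
    by_contra hcon
    push Not at hcon
    apply hxy
    simp only [Prod.mk.injEq]
    omega
  have hsize : |β| + |γ| ≤ 2 * (t : ℤ) + 1 := by
    rcases abs_cases β with ⟨u, _⟩ | ⟨u, _⟩ <;>
      rcases abs_cases γ with ⟨w, _⟩ | ⟨w, _⟩ <;> omega
  clear_value t
  clear hF hF' hβ hγ hxy hcard hmap
  have hβ0 : β ≠ 0 := by
    intro h0
    rw [h0, zero_mul, zero_sub, dvd_neg] at hd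
    have : γ = 0 := Int.eq_zero_of_abs_lt_dvd hd (by have := abs_nonneg β; omega)
    tauto
  have hγ0 : γ ≠ 0 := by
    intro h0
    rw [h0, sub_zero] at hd
    have h4 : IsCoprime (k : ℤ) (h : ℤ) := (Nat.isCoprime_iff_coprime.2 hgcd).symm
    exact hβ0 (Int.eq_zero_of_abs_lt_dvd (h4.dvd_of_dvd_mul_right hd)
      (by have := abs_nonneg γ; omega))
  have hβ1 := Int.one_le_abs hβ0
  have hγ1 := Int.one_le_abs hγ0
  rcases lt_or_gt_of_ne hγ0 with hs | hs
  · rw [abs_of_neg hs] at hsize hγ1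
    refine ⟨(-β, -γ), ⟨?_, ?_, ?_, ?_, ?_⟩, ?_⟩ <;> simp only [abs_neg]
    · omega
    · omega
    · omega
    · omega
    · refine (Int.modEq_iff_dvd.2 ?_)
      convert hd using 1; ring
    · omega
  · rw [abs_of_pos hs] at hsize hγ1
    refine ⟨(β, γ), ⟨hβ1, by simp only; omega, hγ1, by simp only; omega, ?_⟩, hsize⟩
    exact (Int.modEq_iff_dvd.2 hd).symm

/-- Parallel points of `Z(h,k)` lie on one ray, so `|β|` and `γ` order them alike. -/
lemma abs_fst_lt_of_par {h k : ℕ} {p v : ℤ × ℤ} (hp : Zhk h k p) (hv : Zhk h k v)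
    (hpv : Par p v) (hlt : p.2 < v.2) : |p.1| < |v.1| := by
  have e : |p.1| * v.2 = |v.1| * p.2 := by
    have := congrArg abs hpv
    rwa [abs_mul, abs_mul, abs_of_pos (show 0 < v.2 by have := hv.2.2.1; omega),
      abs_of_pos (show 0 < p.2 by have := hp.2.2.1; omega)] at this
  have h1 := hv.1
  have h2 := hv.2.2.1
  by_contra hcon
  push Not at hcon
  nlinarith

/-- The error estimate for `k ≥ 4`, in terms of the bound `2⌊√(k/2)⌋ + 1` for the least `ℓ¹`-norm
on `Z(h,k)`. -/
lemma error_le {h k m : ℕ} (hk : 4 ≤ k) (hgcd : Nat.gcd h k = 1) {v₀ : ℤ × ℤ}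
    (hZ : Zhk h k v₀) (hmin : ∀ p : ℤ × ℤ, Zhk h k p → |v₀.1 * v₀.2| ≤ |p.1 * p.2|) :
    |S m h k - Cl2 (2 * π * m * (v₀.2 : ℝ) / k) / (|(v₀.1 : ℝ) * v₀.2|)|
      ≤ (2 * (Nat.sqrt (k / 2) : ℝ) + 1) / k * (6 + 2 * Real.log k) := by
  have hk0 : 0 < k := by omega
  have hk' : (0 : ℝ) < k := by exact_mod_cast hk0
  have hlog : 0 ≤ Real.log k := Real.log_natCast_nonneg k
  obtain ⟨w, hw, hwL⟩ := exists_small hk hgcd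
  obtain ⟨v, hvmem, hvmin⟩ := Finset.exists_min_image (ZhkFinset h k)
    (fun p => |p.1| + p.2) ⟨w, mem_ZhkFinset.2 hw⟩
  have hv := mem_ZhkFinset.1 hvmem
  have hvL : (|(v.1 : ℝ)| + v.2) ≤ 2 * (Nat.sqrt (k / 2) : ℝ) + 1 := by
    have := (hvmin w (mem_ZhkFinset.2 hw)).trans hwL
    exact_mod_cast this
  have cm : ClassMin h k v := by
    intro p hp hpv
    by_contra hcon
    push Not at hcon
    have h1 := abs_fst_lt_of_par hp hv hpv hcon
    have h2 := hvmin p (mem_ZhkFinset.2 hp)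
    omega
  have cm0 : ClassMin h k v₀ := by
    intro p hp hpv
    by_contra hcon
    push Not at hcon
    have h1 := abs_fst_lt_of_par hp hZ hpv hcon
    have h2 := hmin p hp
    have h3 := hp.2.2.1
    rw [abs_mul, abs_mul, abs_of_pos (show 0 < v₀.2 by omega),
      abs_of_pos (show 0 < p.2 by omega)] at h2
    have h4 := abs_nonneg p.1
    nlinarith
  have hsplit : S m h k = ∑ p ∈ (ZhkFinset h k).filter (fun p => Par p v), summand m k p +
      ∑ p ∈ (ZhkFinset h k).filter (fun p => ¬ Par p v), summand m k p := by
    rw [Finset.sum_filter_add_sum_filter_not]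
    rfl
  have hnp := sum_not_par_le (m := m) hk0 hgcd hv
  set A := ∑ p ∈ (ZhkFinset h k).filter (fun p => Par p v), summand m k p with hA
  set B := ∑ p ∈ (ZhkFinset h k).filter (fun p => ¬ Par p v), summand m k p
  set C := Cl2 (2 * π * m * (v₀.2 : ℝ) / k) / |(v₀.1 : ℝ) * v₀.2| with hC
  set L := 2 * (Nat.sqrt (k / 2) : ℝ) + 1 with hL
  have hL1 : 1 ≤ L := by
    have : (0 : ℝ) ≤ Nat.sqrt (k / 2) := by positivity
    linarith
  have hB : |B| ≤ L / k * (2 * (1 + Real.log k)) := by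
    refine hnp.trans ?_
    gcongr
  have hAC : |A - C| ≤ 4 * (L / k) := by
    by_cases hpar : Par v₀ v
    · have e2 : v₀.2 = v.2 := le_antisymm (cm0 v hv hpar.symm) (cm v₀ hZ hpar)
      have e1 : v₀.1 = v.1 := by
        unfold Par at hpar
        rw [e2] at hpar
        exact mul_right_cancel₀ (by have := hv.2.2.1; omega) hpar
      have e : v₀ = v := Prod.ext e1 e2
      rw [hA, hC, e]
      refine (par_sum_sub_le hk0 hv cm).trans ?_
      rw [← mul_div_assoc]
      gcongr
      linarith
    · have hP0 := one_le_prod hZ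
      have hP : |(v₀.1 : ℝ) * v₀.2| ≤ |(v.1 : ℝ) * v.2| := by exact_mod_cast hmin v hv
      obtain ⟨a1, a2⟩ := cast_pos hZ
      obtain ⟨b1, b2⟩ := cast_pos hv
      have hinv : 1 / |(v₀.1 : ℝ) * v₀.2| ≤ L / k := by
        have h1 := inv_le_of_not_par hk0 hZ hv hpar
        rw [abs_mul, abs_of_pos (show (0 : ℝ) < v₀.2 by linarith)]
        refine h1.trans ?_
        rw [one_div_mul_eq_div]
        gcongr
        have c1 : 1 / (v₀.2 : ℝ) ≤ 1 := by
          rw [div_le_one (by linarith)]; exact a2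
        have c2 : 1 / |(v₀.1 : ℝ)| ≤ 1 := by
          rw [div_le_one (by linarith)]; exact a1
        nlinarith
      have hinv' : 1 / |(v.1 : ℝ) * v.2| ≤ L / k := by
        refine le_trans ?_ hinv
        gcongr
      have hA' : |A| ≤ 2 * (1 / |(v.1 : ℝ) * v.2|) := abs_par_sum_le hv cm
      have hC' : |C| ≤ 2 * (1 / |(v₀.1 : ℝ) * v₀.2|) := by
        rw [hC, abs_div, abs_abs, div_eq_mul_one_div]
        gcongr
        exact abs_cl2_le _
      have := abs_sub A C
      linarith
  have : S m h k - C = (A - C) + B := by rw [hsplit]; ring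
  rw [this]
  refine (abs_add_le _ _).trans ?_
  calc _ ≤ 4 * (L / k) + L / k * (2 * (1 + Real.log k)) := add_le_add hAC hB
    _ = _ := by ring

theorem stmt14 (h k m : ℕ) (hh : 1 ≤ h) (hhk : h < k) (hgcd : Nat.gcd h k = 1)
    (hmk : m < k) (β₀ γ₀ : ℤ) (hZ : Zhk h k (β₀, γ₀))
    (hmin : ∀ p : ℤ × ℤ, Zhk h k p → |β₀ * γ₀| ≤ |p.1 * p.2|) :
    |S m h k - Cl2 (2 * π * m * (γ₀ : ℝ) / k) / (|(β₀ : ℝ) * (γ₀ : ℝ)|)|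
      ≤ (15.06 + 2 * Real.sqrt 2 * Real.log k) / Real.sqrt k := by
  have hk' : (0 : ℝ) < k := by exact_mod_cast (by omega : 0 < k)
  have hlog : 0 ≤ Real.log k := Real.log_natCast_nonneg k
  set s := Real.sqrt k with hs
  have hss : s * s = k := Real.mul_self_sqrt hk'.le
  have hs0 : 0 < s := Real.sqrt_pos.2 hk'
  set r := Real.sqrt 2 with hr
  have hrr : r * r = 2 := Real.mul_self_sqrt (by norm_num)
  have hr0 : 0 < r := Real.sqrt_pos.2 (by norm_num)
  have hr1 : r ≤ 1.42 := by
    rw [hr, Real.sqrt_le_left (by norm_num)]; norm_num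
  have hr2 : 1.4 ≤ r := by
    rw [hr, Real.le_sqrt' (by norm_num)]; norm_num
  by_cases hk : 4 ≤ k
  · refine (error_le (m := m) hk hgcd hZ hmin).trans ?_
    have ht : (2 * (Nat.sqrt (k / 2) : ℝ) + 1) ≤ r * s + 1 := by
      have h1 : Nat.sqrt (k / 2) * Nat.sqrt (k / 2) ≤ k / 2 := Nat.sqrt_le _
      have h2 : Nat.sqrt (k / 2) * Nat.sqrt (k / 2) * 2 ≤ k := by omega
      have h3 : (Nat.sqrt (k / 2) : ℝ) * Nat.sqrt (k / 2) * 2 ≤ k := by exact_mod_cast h2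
      have h4 : 2 * (Nat.sqrt (k / 2) : ℝ) ≤ r * s := by
        refine abs_le_of_sq_le_sq' ?_ (by positivity) |>.2
        calc (2 * (Nat.sqrt (k / 2) : ℝ)) ^ 2
            = 2 * ((Nat.sqrt (k / 2) : ℝ) * Nat.sqrt (k / 2) * 2) := by ring
          _ ≤ 2 * k := by linarith
          _ = (r * r) * (s * s) := by rw [hrr, hss]
          _ = _ := by ring
      linarith
    have hs2 : 2 ≤ s := by
      rw [hs]
      refine Real.le_sqrt_of_sq_le ?_
      have : (4 : ℝ) ≤ k := by exact_mod_cast hk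
      linarith
    -- `log k = 2 log √k ≤ 2(√k - 1)` absorbs the `+ 1` in the bound for the short vector.
    have hl : Real.log k ≤ 2 * (s - 1) := by
      rw [← hss, Real.log_mul hs0.ne' hs0.ne']
      have := Real.log_le_sub_one_of_pos hs0
      linarith
    calc _ ≤ (r * s + 1) / k * (6 + 2 * Real.log k) := by gcongr
      _ = (r * (6 + 2 * Real.log k) + (6 + 2 * Real.log k) / s) / s := by
          rw [← hss]; field_simp
      _ ≤ _ := by
          refine div_le_div_of_nonneg_right ?_ hs0.le
          have : (6 + 2 * Real.log k) / s ≤ 5 := by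
            rw [div_le_iff₀ hs0]; linarith
          linarith
  · have hS := abs_S_le (m := m) hgcd
    have hP := one_le_prod hZ
    simp only at hP
    have hC : |Cl2 (2 * π * m * (γ₀ : ℝ) / k) / (|(β₀ : ℝ) * γ₀|)| ≤ 2 := by
      rw [abs_div, abs_abs]
      exact (div_le_self (abs_nonneg _) hP).trans (abs_cl2_le _)
    have hk3 : (k : ℝ) ≤ 3 := by exact_mod_cast (by omega : k ≤ 3)
    have hl : Real.log k ≤ 2 := by
      have := Real.log_le_sub_one_of_pos hk'
      linarith
    have hs3 : s ≤ 1.74 := by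
      rw [hs, Real.sqrt_le_left (by norm_num)]; linarith
    refine (abs_sub _ _).trans ((add_le_add hS hC).trans ?_)
    rw [le_div_iff₀ hs0]
    nlinarith [mul_nonneg hlog (sub_nonneg.2 hs3), mul_nonneg hlog (sub_nonneg.2 hr2)]
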